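/- Let c be a positive integer and let S and T be ordered trees. There exists an ordered tree U such that for every coloring with c colors of the set of all copies of S in U there is an embedding j : T → U such that all copies of S in U of the form j(C), where C is a copy of S in T, receive the same color. -/

import Mathlib

/-- `w` is an immediate successor of `v` with respect to the order `le`. -/
def TreeImmSucc {α : Type} (le : α → α → Prop) (v w : α) : Prop :=
  le v w ∧ v ≠ w ∧ ∀ u, le v u → le u w → u = v ∨ u = w

/-- An *ordered tree*: a finite nonempty partial order `(α, le)` with a least element (the
root) in which the set of predecessors of each element is linearly ordered, together with a
linear order `sOrd v` on the set of immediate successors of each vertex `v`. -/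
structure OTree where
  α : Type
  fin : Finite α
  le : α → α → Prop
  le_refl : ∀ v, le v v
  le_antisymm : ∀ v w, le v w → le w v → v = w
  le_trans : ∀ u v w, le u v → le v w → le u w
  root : α
  root_le : ∀ v, le root v
  pred_linear : ∀ v a b, le a v → le b v → le a b ∨ le b a
  sOrd : α → α → α → Prop
  sOrd_dom : ∀ v a b, sOrd v a b → TreeImmSucc le v a ∧ TreeImmSucc le v b
  sOrd_refl : ∀ v a, TreeImmSucc le v a → sOrd v a a
  sOrd_antisymm : ∀ v a b, sOrd v a b → sOrd v b a → a = b
  sOrd_trans : ∀ v a b c, sOrd v a b → sOrd v b c → sOrd v a c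
  sOrd_total : ∀ v a b, TreeImmSucc le v a → TreeImmSucc le v b → sOrd v a b ∨ sOrd v b a

namespace OTree

/-- `m` is the meet (largest common predecessor) of `v` and `w`. -/
def IsMeet (T : OTree) (v w m : T.α) : Prop :=
  T.le m v ∧ T.le m w ∧ ∀ u, T.le u v → T.le u w → T.le u m

/-- The lexicographic linear order on an ordered tree: `v ≤ w` iff `v` is a predecessor of
`w`, or neither is a predecessor of the other and the predecessor of `v` among the immediate
successors of `v ∧ w` precedes that of `w` in the given order on immediate successors. -/
def lexLE (T : OTree) (v w : T.α) : Prop :=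
  T.le v w ∨ (¬ T.le v w ∧ ¬ T.le w v ∧
    ∃ m a b, T.IsMeet v w m ∧ TreeImmSucc T.le m a ∧ T.le a v ∧
      TreeImmSucc T.le m b ∧ T.le b w ∧ T.sOrd m a b)

/-- A *morphism* of ordered trees: preserves meets, is monotone for the lexicographic orders,
and maps root to root. -/
def IsMorphism (S T : OTree) (e : S.α → T.α) : Prop :=
  (∀ v w m, S.IsMeet v w m → T.IsMeet (e v) (e w) (e m)) ∧
  (∀ v w, S.lexLE v w → T.lexLE (e v) (e w)) ∧
  e S.root = T.root

/-- `f : T → S` is a *rigid surjection* if there is a morphism `e : S → T` with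
`e (f w) ⊑ w` for all `w ∈ T` and `f (e v) = v` for all `v ∈ S`. -/
def IsRigidSurjection (T S : OTree) (f : T.α → S.α) : Prop :=
  ∃ e : S.α → T.α, IsMorphism S T e ∧ (∀ w : T.α, T.le (e (f w)) w) ∧ (∀ v : S.α, f (e v) = v)

end OTree

open OTree

/-- A *copy* of `S` in `T` is the image of an injective morphism (an embedding) from `S`
to `T`. -/
def OTree.IsCopy (S T : OTree) (C : Set T.α) : Prop :=
  ∃ e : S.α → T.α, IsMorphism S T e ∧ Function.Injective e ∧ Set.range e = C

/-!
A nonempty finite ordered forest has the form `WithBot α ⊕ β`: the leftmost tree, consisting of its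
root and the forest `α` above that root, followed by the forest `β` of the remaining trees. This
makes induction on forests possible.

The Ramsey property passes from `α` to `WithBot α`, and from a tree `α` and a forest `β` to `α ⊕ β`.
In both cases, an induction on the target forest, applying the given Ramsey properties at each root,
makes the colour of an embedding depend only on where the leftmost root goes. What is left is a
colouring of the vertices of the target, which the vertex Ramsey theorem makes constant. For trees
with embeddings preserving roots, remove both roots, apply the Ramsey property of the remaining
forest, and add a root again.
-/

universe u v

/-- Ordered forests, encoded by the tree order together with the relation `left x y`: `x` and `y`
are incomparable and `x` lies to the left of `y`. The lexicographic order of the forest is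
`x ≤ y ∨ left x y`; monotonicity and irreflexivity of `left` make the predecessors of each element
linearly ordered. -/
class OrderedForest (α : Type u) extends PartialOrder α where
  left : α → α → Prop
  left_irrefl : ∀ x, ¬ left x x
  left_trans : ∀ {x y z}, left x y → left y z → left x z
  left_mono : ∀ {x x' y y'}, left x y → x ≤ x' → y ≤ y' → left x' y'
  le_or_left : ∀ x y, x ≤ y ∨ y ≤ x ∨ left x y ∨ left y x

infix:50 " ≺ " => OrderedForest.left

/-- Embeddings of ordered forests: injections preserving the tree order, the left-to-right order
and meets. Since roots of distinct trees have no meet, distinct trees go to distinct trees. -/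
structure ForestEmbedding (α : Type u) (β : Type v) [OrderedForest α] [OrderedForest β] where
  toFun : α → β
  map_le_map_iff' : ∀ x y, toFun x ≤ toFun y ↔ x ≤ y
  map_left' : ∀ x y, x ≺ y → toFun x ≺ toFun y
  exists_le_of_le' : ∀ z x y, z ≤ toFun x → z ≤ toFun y → ∃ w ≤ x, w ≤ y ∧ z ≤ toFun w

infixr:25 " ↪ᶠ " => ForestEmbedding

namespace OrderedForest

section Order

variable {α : Type u} [OrderedForest α] {x y z : α}

theorem left_asymm (h : x ≺ y) : ¬ y ≺ x := fun h' => left_irrefl x (left_trans h h')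

theorem not_le_of_left (h : x ≺ y) : ¬ x ≤ y := fun h' => left_irrefl y (left_mono h h' le_rfl)

theorem not_ge_of_left (h : x ≺ y) : ¬ y ≤ x := fun h' => left_irrefl x (left_mono h le_rfl h')

theorem le_total_of_le (hx : x ≤ z) (hy : y ≤ z) : x ≤ y ∨ y ≤ x := by
  rcases le_or_left x y with h | h | h | h
  · exact .inl h
  · exact .inr h
  · exact absurd (left_mono h hx hy) (left_irrefl z)
  · exact absurd (left_mono h hy hx) (left_irrefl z)

end Order

section Constructions

variable {α : Type u} {β : Type v} [OrderedForest α] [OrderedForest β]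

instance (p : α → Prop) : OrderedForest {x // p x} where
  left x y := (x : α) ≺ y
  left_irrefl x := left_irrefl (x : α)
  left_trans := left_trans
  left_mono := left_mono
  le_or_left x y := le_or_left (x : α) y

instance : OrderedForest (WithBot α) where
  left := Relation.Map left ((↑) : α → WithBot α) ((↑) : α → WithBot α)
  left_irrefl := by
    rintro _ ⟨x, y, h, rfl, hyx⟩
    exact left_irrefl x (WithBot.coe_injective hyx ▸ h)
  left_trans := by
    rintro _ _ _ ⟨x, y, hxy, rfl, rfl⟩ ⟨y', z, hyz, hy, rfl⟩
    exact ⟨x, z, left_trans hxy (WithBot.coe_injective hy ▸ hyz), rfl, rfl⟩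
  left_mono := by
    rintro _ x' _ y' ⟨x, y, hxy, rfl, rfl⟩ hx hy
    obtain ⟨x', rfl, hx'⟩ := WithBot.coe_le_iff.1 hx
    obtain ⟨y', rfl, hy'⟩ := WithBot.coe_le_iff.1 hy
    exact ⟨x', y', left_mono hxy hx' hy', rfl, rfl⟩
  le_or_left x y := by
    induction x with
    | bot => exact .inl bot_le
    | coe x =>
      induction y with
      | bot => exact .inr (.inl bot_le)
      | coe y => simpa [Relation.Map] using le_or_left x y

@[simp]
theorem coe_left_coe {x y : α} : (x : WithBot α) ≺ y ↔ x ≺ y := by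
  simp [left, Relation.Map]

@[simp]
theorem not_bot_left (x : WithBot α) : ¬ ⊥ ≺ x := fun h => not_le_of_left h bot_le

@[simp]
theorem not_left_bot (x : WithBot α) : ¬ x ≺ ⊥ := fun h => not_ge_of_left h bot_le

instance : OrderedForest (α ⊕ β) where
  left := Sum.Lex left left
  left_irrefl := by rintro (x | x) <;> simp [left_irrefl]
  left_trans := by
    rintro _ _ _ (hxy | hxy | _) (hyz | hyz | _)
    exacts [.inl (left_trans hxy hyz), .sep _ _, .inr (left_trans hxy hyz), .sep _ _]
  left_mono := by
    rintro _ _ _ _ (hxy | hxy | _) (hx | hx) (hy | hy)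
    exacts [.inl (left_mono hxy hx hy), .inr (left_mono hxy hx hy), .sep _ _]
  le_or_left := by
    rintro (x | x) (y | y) <;> simp [le_or_left]

@[simp]
theorem inl_left_inl {x y : α} : (Sum.inl x : α ⊕ β) ≺ Sum.inl y ↔ x ≺ y := Sum.lex_inl_inl

@[simp]
theorem inr_left_inr {x y : β} : (Sum.inr x : α ⊕ β) ≺ Sum.inr y ↔ x ≺ y := Sum.lex_inr_inr

@[simp]
theorem inl_left_inr (x : α) (y : β) : (Sum.inl x : α ⊕ β) ≺ Sum.inr y := Sum.Lex.sep x y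

@[simp]
theorem not_inr_left_inl (x : α) (y : β) : ¬ (Sum.inr y : α ⊕ β) ≺ Sum.inl x := Sum.lex_inr_inl

end Constructions

end OrderedForest

open OrderedForest

namespace ForestEmbedding

variable {α β γ δ : Type*} [OrderedForest α] [OrderedForest β] [OrderedForest γ] [OrderedForest δ]

instance : FunLike (α ↪ᶠ β) α β where
  coe := toFun
  coe_injective f g h := by cases f; congr

@[ext]
theorem ext {f g : α ↪ᶠ β} (h : ∀ x, f x = g x) : f = g := DFunLike.ext f g h

instance [Finite α] [Finite β] : Finite (α ↪ᶠ β) := FunLike.finite _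

@[simp]
theorem map_le_map_iff (f : α ↪ᶠ β) {x y : α} : f x ≤ f y ↔ x ≤ y := f.map_le_map_iff' x y

theorem map_left (f : α ↪ᶠ β) {x y : α} (h : x ≺ y) : f x ≺ f y := f.map_left' x y h

theorem exists_le_of_le (f : α ↪ᶠ β) {z : β} {x y : α} (hx : z ≤ f x) (hy : z ≤ f y) :
    ∃ w ≤ x, w ≤ y ∧ z ≤ f w := f.exists_le_of_le' z x y hx hy

theorem injective (f : α ↪ᶠ β) : Function.Injective f := fun _ _ h =>
  le_antisymm (f.map_le_map_iff.1 h.le) (f.map_le_map_iff.1 h.ge)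

@[simp]
theorem map_left_map_iff (f : α ↪ᶠ β) {x y : α} : f x ≺ f y ↔ x ≺ y := by
  refine ⟨fun h => ?_, f.map_left⟩
  rcases le_or_left x y with hxy | hyx | hxy | hyx
  · exact absurd (f.map_le_map_iff.2 hxy) (not_le_of_left h)
  · exact absurd (f.map_le_map_iff.2 hyx) (not_ge_of_left h)
  · exact hxy
  · exact absurd h (left_asymm (f.map_left hyx))

/-- The identity embedding of an ordered forest. -/
protected def refl (α : Type*) [OrderedForest α] : α ↪ᶠ α where
  toFun := id
  map_le_map_iff' _ _ := .rfl
  map_left' _ _ := id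
  exists_le_of_le' z _ _ hx hy := ⟨z, hx, hy, le_rfl⟩

/-- Composition of embeddings of ordered forests. -/
def comp (g : β ↪ᶠ γ) (f : α ↪ᶠ β) : α ↪ᶠ γ where
  toFun := g ∘ f
  map_le_map_iff' _ _ := g.map_le_map_iff.trans f.map_le_map_iff
  map_left' _ _ h := g.map_left (f.map_left h)
  exists_le_of_le' _ _ _ hx hy := by
    obtain ⟨w, hwx, hwy, hzw⟩ := g.exists_le_of_le hx hy
    obtain ⟨w', hwx, hwy, hww⟩ := f.exists_le_of_le hwx hwy
    exact ⟨w', hwx, hwy, hzw.trans (g.map_le_map_iff.2 hww)⟩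

@[simp]
theorem comp_apply (g : β ↪ᶠ γ) (f : α ↪ᶠ β) (x : α) : g.comp f x = g (f x) := rfl

theorem comp_refl (f : α ↪ᶠ β) : f.comp (.refl α) = f := rfl

/-- The embedding of the empty forest. -/
def ofIsEmpty [IsEmpty α] : α ↪ᶠ β where
  toFun := isEmptyElim
  map_le_map_iff' := isEmptyElim
  map_left' := isEmptyElim
  exists_le_of_le' _ := isEmptyElim

/-- A surjection preserving and reflecting the tree order preserves meets, so it is an embedding
of ordered forests as soon as it preserves the left-to-right order. -/
def ofSurjective (f : α → β) (hle : ∀ x y, f x ≤ f y ↔ x ≤ y) (hleft : ∀ x y, x ≺ y → f x ≺ f y)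
    (hf : Function.Surjective f) : α ↪ᶠ β where
  toFun := f
  map_le_map_iff' := hle
  map_left' := hleft
  exists_le_of_le' z x y hx hy := by
    obtain ⟨w, rfl⟩ := hf z
    exact ⟨w, (hle _ _).1 hx, (hle _ _).1 hy, le_rfl⟩

/-- The inclusion of the left summand. -/
def inl : α ↪ᶠ α ⊕ β where
  toFun := Sum.inl
  map_le_map_iff' _ _ := Sum.inl_le_inl_iff
  map_left' _ _ := inl_left_inl.2
  exists_le_of_le' := by
    rintro _ x y (hx | _) (hy | _)
    exact ⟨_, hx, hy, le_rfl⟩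

/-- The inclusion of the right summand. -/
def inr : β ↪ᶠ α ⊕ β where
  toFun := Sum.inr
  map_le_map_iff' _ _ := Sum.inr_le_inr_iff
  map_left' _ _ := inr_left_inr.2
  exists_le_of_le' := by
    rintro _ x y (_ | hx) (_ | hy)
    exact ⟨_, hx, hy, le_rfl⟩

/-- The disjoint union of two embeddings. -/
def sumMap (f : α ↪ᶠ γ) (g : β ↪ᶠ δ) : α ⊕ β ↪ᶠ γ ⊕ δ where
  toFun := Sum.map f g
  map_le_map_iff' := by rintro (x | x) (y | y) <;> simp
  map_left' := by rintro (x | x) (y | y) <;> simp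
  exists_le_of_le' := by
    rintro _ (x | x) (y | y) (hx | hx) (hy | hy)
    · simpa using f.exists_le_of_le hx hy
    · simpa using g.exists_le_of_le hx hy

/-- The embedding obtained by adding a root below both forests. -/
def withBotMap (f : α ↪ᶠ β) : WithBot α ↪ᶠ WithBot β where
  toFun := WithBot.map f
  map_le_map_iff' x y := by cases x <;> cases y <;> simp
  map_left' x y := by cases x <;> cases y <;> simp
  exists_le_of_le' z x y hx hy := by
    cases z with
    | bot => exact ⟨⊥, bot_le, bot_le, bot_le⟩
    | coe z =>
      cases x <;> cases y <;> simp only [WithBot.map_bot, WithBot.map_coe, WithBot.coe_le_coe,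
        le_bot_iff, WithBot.coe_ne_bot] at hx hy
      simpa [WithBot.exists] using f.exists_le_of_le hx hy

/-- The embedding of a tree into a forest, with a root added below that forest. Only trees are
allowed as domains because distinct trees of a forest would acquire the new root as meet. -/
def withBotCoe [OrderBot α] (f : α ↪ᶠ β) : α ↪ᶠ WithBot β where
  toFun x := f x
  map_le_map_iff' _ _ := WithBot.coe_le_coe.trans f.map_le_map_iff
  map_left' _ _ h := coe_left_coe.2 (f.map_left h)
  exists_le_of_le' z x y hx hy := by
    cases z with
    | bot => exact ⟨⊥, bot_le, bot_le, bot_le⟩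
    | coe z => simpa using f.exists_le_of_le (WithBot.coe_le_coe.1 hx) (WithBot.coe_le_coe.1 hy)

@[simp]
theorem withBotMap_bot (f : α ↪ᶠ β) : f.withBotMap ⊥ = ⊥ := rfl

theorem withBotMap_comp (g : β ↪ᶠ γ) (f : α ↪ᶠ β) :
    (g.comp f).withBotMap = g.withBotMap.comp f.withBotMap := by
  ext x; cases x <;> rfl

theorem sumMap_comp_sumMap {α' β' : Type*} [OrderedForest α'] [OrderedForest β'] (f : γ ↪ᶠ α')
    (g : δ ↪ᶠ β') (f' : α ↪ᶠ γ) (g' : β ↪ᶠ δ) :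
    (sumMap f g).comp (sumMap f' g') = sumMap (f.comp f') (g.comp g') := by
  ext (x | x) <;> rfl

/-! ### Decomposition of embeddings -/

/-- An embedding whose image is contained in that of `i` factors through `i`. -/
theorem exists_factor (e : α ↪ᶠ γ) {i : β → γ} (hle : ∀ x y, i x ≤ i y ↔ x ≤ y)
    (hleft : ∀ x y, i x ≺ i y → x ≺ y) (h : ∀ x, ∃ y, i y = e x) :
    ∃ g : α ↪ᶠ β, ∀ x, i (g x) = e x := by
  choose g hg using h
  refine ⟨⟨g, fun x y => ?_, fun x y hxy => hleft _ _ ?_, fun z x y hx hy => ?_⟩, hg⟩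
  · rw [← hle, hg, hg, e.map_le_map_iff]
  · rw [hg, hg]; exact e.map_left hxy
  · rw [← hle, hg] at hx hy
    obtain ⟨w, hwx, hwy, hzw⟩ := e.exists_le_of_le hx hy
    exact ⟨w, hwx, hwy, by rwa [← hle, hg]⟩

theorem exists_rightInverse (f : α ↪ᶠ β) (hf : Function.Surjective f) :
    ∃ g : β ↪ᶠ α, f.comp g = .refl β := by
  obtain ⟨g, hg⟩ := (ForestEmbedding.refl β).exists_factor (i := f)
    (fun _ _ => f.map_le_map_iff) (fun _ _ => f.map_left_map_iff.1) hf
  exact ⟨g, ext hg⟩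

theorem eq_comp_inl (e : α ↪ᶠ γ ⊕ δ) (h : ∀ x, ∃ y, Sum.inl y = e x) :
    ∃ g : α ↪ᶠ γ, e = inl.comp g := by
  obtain ⟨g, hg⟩ := e.exists_factor (fun _ _ => Sum.inl_le_inl_iff)
    (fun _ _ => inl_left_inl.1) h
  exact ⟨g, ext fun x => (hg x).symm⟩

theorem eq_comp_inr (e : α ↪ᶠ γ ⊕ δ) (h : ∀ x, ∃ y, Sum.inr y = e x) :
    ∃ g : α ↪ᶠ δ, e = inr.comp g := by
  obtain ⟨g, hg⟩ := e.exists_factor (fun _ _ => Sum.inr_le_inr_iff)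
    (fun _ _ => inr_left_inr.1) h
  exact ⟨g, ext fun x => (hg x).symm⟩

theorem eq_withBotMap (e : WithBot α ↪ᶠ WithBot β) (he : e ⊥ = ⊥) :
    ∃ g : α ↪ᶠ β, e = g.withBotMap := by
  have h (x : α) : ∃ y : β, (y : WithBot β) = e x :=
    WithBot.ne_bot_iff_exists.1 fun h => WithBot.coe_ne_bot (e.injective (h.trans he.symm))
  choose g hg using h
  refine ⟨⟨g, fun x y => ?_, fun x y hxy => ?_, fun z x y hx hy => ?_⟩, ext fun x => ?_⟩
  · rw [← WithBot.coe_le_coe, hg, hg, e.map_le_map_iff, WithBot.coe_le_coe]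
  · rw [← coe_left_coe, hg, hg]; exact e.map_left (coe_left_coe.2 hxy)
  · rw [← WithBot.coe_le_coe, hg] at hx hy
    obtain ⟨w, hwx, hwy, hzw⟩ := e.exists_le_of_le hx hy
    cases w with
    | bot => simp [he] at hzw
    | coe w => exact ⟨w, WithBot.coe_le_coe.1 hwx, WithBot.coe_le_coe.1 hwy, by
        rwa [← WithBot.coe_le_coe, hg]⟩
  · cases x with
    | bot => exact he
    | coe x => exact (hg x).symm

theorem eq_withBotMap_or_eq_withBotCoe (e : WithBot α ↪ᶠ WithBot β) :
    (∃ g : α ↪ᶠ β, e = g.withBotMap) ∨ ∃ g : WithBot α ↪ᶠ β, e = g.withBotCoe := by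
  refine or_iff_not_imp_left.2 fun h => ?_
  have hbot : e ⊥ ≠ ⊥ := fun he => h (e.eq_withBotMap he)
  obtain ⟨g, hg⟩ := e.exists_factor (fun _ _ => WithBot.coe_le_coe) (fun _ _ => coe_left_coe.1)
    fun x => WithBot.ne_bot_iff_exists.1
      (ne_bot_of_le_ne_bot hbot (e.map_le_map_iff.2 bot_le))
  exact ⟨g, ext fun x => (hg x).symm⟩

theorem eq_comp_inl_or_eq_comp_inr [OrderBot α] (e : α ↪ᶠ γ ⊕ δ) :
    (∃ g : α ↪ᶠ γ, e = inl.comp g) ∨ ∃ g : α ↪ᶠ δ, e = inr.comp g := by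
  have hle (x : α) : e ⊥ ≤ e x := e.map_le_map_iff.2 bot_le
  rcases hbot : e ⊥ with y | y <;> simp only [hbot] at hle
  · exact .inl (e.eq_comp_inl fun x => by
      rcases hx : e x with z | z
      · exact ⟨z, rfl⟩
      · exact absurd (hle x) (by simp [hx]))
  · exact .inr (e.eq_comp_inr fun x => by
      rcases hx : e x with z | z
      · exact absurd (hle x) (by simp [hx])
      · exact ⟨z, rfl⟩)

theorem eq_comp_inr_or_eq_sumMap [OrderBot α] [OrderBot γ] (e : α ⊕ β ↪ᶠ γ ⊕ δ) :
    (∃ g : α ⊕ β ↪ᶠ δ, e = inr.comp g) ∨ ∃ (g : α ↪ᶠ γ) (h : β ↪ᶠ δ), e = sumMap g h := by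
  rcases (e.comp inl).eq_comp_inl_or_eq_comp_inr with ⟨g, hg⟩ | ⟨g, hg⟩
  · have hinl (a : α) : e (Sum.inl a) = Sum.inl (g a) := DFunLike.congr_fun hg a
    have hinr (b : β) : ∃ d, Sum.inr d = e (Sum.inr b) := by
      rcases hb : e (Sum.inr b) with c | d
      · obtain ⟨w, hwa, hwb, -⟩ := e.exists_le_of_le (z := Sum.inl ⊥) (x := Sum.inl ⊥)
          (y := Sum.inr b) (by simp [hinl]) (by simp [hb])
        rcases w with w | w
        · exact absurd hwb Sum.not_inl_le_inr
        · exact absurd hwa Sum.not_inr_le_inl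
      · exact ⟨d, rfl⟩
    obtain ⟨h, hh⟩ := (e.comp inr).eq_comp_inr hinr
    refine .inr ⟨g, h, ext ?_⟩
    rintro (a | b)
    · exact hinl a
    · exact DFunLike.congr_fun hh b
  · have hinl (a : α) : e (Sum.inl a) = Sum.inr (g a) := DFunLike.congr_fun hg a
    refine .inl (e.eq_comp_inr ?_)
    rintro (a | b)
    · exact ⟨_, (hinl a).symm⟩
    · have hleft : Sum.inr (g ⊥) ≺ e (Sum.inr b) := hinl ⊥ ▸ e.map_left (inl_left_inr ⊥ b)
      rcases hb : e (Sum.inr b) with c | d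
      · exact absurd hleft (by simp [hb])
      · exact ⟨d, rfl⟩

end ForestEmbedding

namespace OrderedForest

/-! ### Induction on ordered forests -/

section Cone

variable {α : Type u} [OrderedForest α]

/-- The tree `{x | r ≤ x}`, presented as a root `⊥ ↦ r` below the forest `{x // r < x}`. -/
def coneMap (r : α) : WithBot {x // r < x} → α := WithBot.recBotCoe r (↑)

@[simp]
theorem coneMap_bot (r : α) : coneMap r ⊥ = r := rfl

@[simp]
theorem coneMap_coe (r : α) (x : {x // r < x}) : coneMap r x = x := rfl

theorem le_coneMap (r : α) (x : WithBot {x // r < x}) : r ≤ coneMap r x := by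
  cases x with
  | bot => exact le_rfl
  | coe x => exact x.2.le

theorem coneMap_le_coneMap_iff {r : α} {x y : WithBot {x // r < x}} :
    coneMap r x ≤ coneMap r y ↔ x ≤ y := by
  cases x with
  | bot => simpa using le_coneMap r y
  | coe x =>
    cases y with
    | bot => simpa using x.2.not_ge
    | coe y => simp

theorem coneMap_left {r : α} {x y : WithBot {x // r < x}} (h : x ≺ y) :
    coneMap r x ≺ coneMap r y := by
  obtain ⟨x, y, h, rfl, rfl⟩ := h
  exact h

theorem exists_coneMap_eq {r x : α} (h : r ≤ x) : ∃ y, coneMap r y = x := by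
  rcases h.eq_or_lt with rfl | h
  · exact ⟨⊥, rfl⟩
  · exact ⟨((⟨x, h⟩ : {x // r < x}) : WithBot {x // r < x}), rfl⟩

theorem exists_leftmost_root [Finite α] [Nonempty α] : ∃ r : α, ∀ x, r ≤ x ∨ r ≺ x := by
  have : IsTrans α left := ⟨fun _ _ _ => left_trans⟩
  have : Std.Irrefl (left : α → α → Prop) := ⟨left_irrefl⟩
  obtain ⟨m, -, hm⟩ :=
    (Finite.wellFounded_of_trans_of_irrefl (left : α → α → Prop)).has_min Set.univ Set.univ_nonempty
  obtain ⟨r, hrm, hr⟩ := (Set.toFinite (Set.univ : Set α)).exists_le_minimal (Set.mem_univ m)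
  refine ⟨r, fun x => ?_⟩
  rcases le_or_left r x with h | h | h | h
  · exact .inl h
  · exact .inl (hr.2 (Set.mem_univ x) h)
  · exact .inr h
  · exact absurd (left_mono h le_rfl hrm) (hm x (Set.mem_univ x))

theorem exists_node_embedding_surjective {r : α} (hr : ∀ x, r ≤ x ∨ r ≺ x) :
    ∃ f : WithBot {x // r < x} ⊕ {x // ¬ r ≤ x} ↪ᶠ α, Function.Surjective f := by
  have hleft (x : WithBot {x // r < x}) (y : {x // ¬ r ≤ x}) : coneMap r x ≺ y :=
    left_mono ((hr y).resolve_left y.2) (le_coneMap r x) le_rfl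
  have hf : Function.Surjective (Sum.elim (coneMap r) ((↑) : {x // ¬ r ≤ x} → α)) := by
    intro x
    by_cases hx : r ≤ x
    · obtain ⟨y, hy⟩ := exists_coneMap_eq hx
      exact ⟨.inl y, hy⟩
    · exact ⟨.inr ⟨x, hx⟩, rfl⟩
  refine ⟨.ofSurjective _ ?_ ?_ hf, hf⟩
  · rintro (x | x) (y | y)
    · simp [coneMap_le_coneMap_iff]
    · simpa using not_le_of_left (hleft x y)
    · simpa using not_ge_of_left (hleft y x)
    · simp
  · rintro _ _ (h | h | _)
    exacts [coneMap_left h, h, hleft _ _]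

theorem exists_withBot_iso (α : Type u) [OrderedForest α] [OrderBot α] :
    ∃ (f : WithBot {x : α // ⊥ < x} ↪ᶠ α) (g : α ↪ᶠ WithBot {x : α // ⊥ < x}),
      f.comp g = .refl α ∧ f ⊥ = ⊥ ∧ g ⊥ = ⊥ := by
  let f : WithBot {x : α // ⊥ < x} ↪ᶠ α := .ofSurjective (coneMap ⊥)
    (fun _ _ => coneMap_le_coneMap_iff) (fun _ _ => coneMap_left) fun _ => exists_coneMap_eq bot_le
  obtain ⟨g, hg⟩ := f.exists_rightInverse fun _ => exists_coneMap_eq bot_le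
  exact ⟨f, g, hg, rfl, f.injective (DFunLike.congr_fun hg ⊥)⟩

end Cone

/-- As embeddings are injective, `f` and `g` in the hypothesis `iso` are inverse to each other. -/
theorem induction_on {P : ∀ (α : Type u) [OrderedForest α], Prop}
    (empty : ∀ (α : Type u) [OrderedForest α] [IsEmpty α], P α)
    (node : ∀ (α β : Type u) [OrderedForest α] [OrderedForest β] [Finite α] [Finite β],
      P α → P β → P (WithBot α ⊕ β))
    (iso : ∀ {α β : Type u} [OrderedForest α] [OrderedForest β] (f : α ↪ᶠ β) (g : β ↪ᶠ α),
      f.comp g = .refl β → P α → P β)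
    (α : Type u) [OrderedForest α] [Finite α] : P α := by
  induction hn : Nat.card α using Nat.strong_induction_on generalizing α with
  | _ n ih =>
    subst hn
    rcases isEmpty_or_nonempty α with _ | _
    · exact empty α
    · obtain ⟨r, hr⟩ := exists_leftmost_root (α := α)
      obtain ⟨f, hf⟩ := exists_node_embedding_surjective hr
      obtain ⟨g, hg⟩ := f.exists_rightInverse hf
      exact iso f g hg (node _ _
        (ih _ (Finite.card_subtype_lt (lt_irrefl r)) _ rfl)
        (ih _ (Finite.card_subtype_lt (x := r) (not_not.2 le_rfl)) _ rfl))

open ForestEmbedding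

/-! ### Colourings of vertices -/

theorem exists_graft (α β : Type u) [OrderedForest α] [OrderedForest β] [Finite α] [Finite β] :
    ∃ (γ : Type u) (_ : OrderedForest γ) (_ : Finite γ) (i : α ↪ᶠ γ),
      ∀ a, ∃ j : WithBot β ↪ᶠ γ, j ⊥ = i a := by
  apply induction_on (α := α)
  · exact fun α _ _ => ⟨α, inferInstance, inferInstance, .refl α, isEmptyElim⟩
  · rintro α₁ α₂ _ _ _ _ ⟨γ₁, _, _, i₁, h₁⟩ ⟨γ₂, _, _, i₂, h₂⟩
    refine ⟨WithBot (β ⊕ γ₁) ⊕ γ₂, inferInstance, inferInstance,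
      sumMap (inr.comp i₁).withBotMap i₂, ?_⟩
    rintro ((_ | a) | a)
    · exact ⟨inl.comp inl.withBotMap, rfl⟩
    · obtain ⟨j, hj⟩ := h₁ a
      exact ⟨inl.comp (inr.comp j).withBotCoe,
        congrArg (fun y : γ₁ => Sum.inl ((Sum.inr y : β ⊕ γ₁) : WithBot (β ⊕ γ₁))) hj⟩
    · obtain ⟨j, hj⟩ := h₂ a
      exact ⟨inr.comp j, congrArg Sum.inr hj⟩
  · rintro α α' _ _ - g - ⟨γ, _, _, i, h⟩
    exact ⟨γ, inferInstance, inferInstance, i.comp g, fun a => h (g a)⟩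

/-- The partition relation `γ → (α, β)` for vertices: every set of vertices of `γ` contains a copy
of `α` or misses a copy of `β`. -/
def VertexArrows (γ α β : Type u) [OrderedForest γ] [OrderedForest α] [OrderedForest β] : Prop :=
  ∀ X : Set γ, (∃ j : α ↪ᶠ γ, ∀ a, j a ∈ X) ∨ ∃ j : β ↪ᶠ γ, ∀ b, j b ∉ X

theorem exists_vertexArrows_withBot (α β : Type u) [OrderedForest α] [OrderedForest β] [Finite α]
    [Finite β] : ∃ (γ : Type u) (_ : OrderedForest γ) (_ : Finite γ),
      VertexArrows γ α (WithBot β) := by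
  apply induction_on (α := α)
  · exact fun α _ _ => ⟨α, inferInstance, inferInstance, fun X => .inl ⟨.refl α, isEmptyElim⟩⟩
  · rintro α₁ α₂ _ _ _ _ ⟨γ₁, _, _, h₁⟩ ⟨γ₂, _, _, h₂⟩
    obtain ⟨δ, _, _, i, hi⟩ := exists_graft (WithBot β) γ₁
    refine ⟨δ ⊕ γ₂, inferInstance, inferInstance, fun X => ?_⟩
    by_cases hX : ∃ b, Sum.inl (i b) ∈ X
    · obtain ⟨b, hb⟩ := hX
      obtain ⟨j, hj⟩ := hi b
      rcases h₁ {x | Sum.inl (j x) ∈ X} with ⟨j₁, hj₁⟩ | ⟨j₁, hj₁⟩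
      · rcases h₂ {x | Sum.inr x ∈ X} with ⟨j₂, hj₂⟩ | ⟨j₂, hj₂⟩
        · refine .inl ⟨sumMap (j.comp j₁.withBotMap) j₂, ?_⟩
          rintro ((_ | a) | a)
          · exact (congrArg (Sum.inl · ∈ X) hj).mpr hb
          · exact hj₁ a
          · exact hj₂ a
        · exact .inr ⟨inr.comp j₂, hj₂⟩
      · exact .inr ⟨inl.comp (j.comp j₁.withBotCoe), hj₁⟩
    · exact .inr ⟨inl.comp i, not_exists.1 hX⟩
  · rintro α α' _ _ - g - ⟨γ, _, _, h⟩
    exact ⟨γ, inferInstance, inferInstance, fun X =>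
      (h X).imp_left fun ⟨j, hj⟩ => ⟨j.comp g, fun a => hj (g a)⟩⟩

theorem exists_vertexArrows (α β : Type u) [OrderedForest α] [OrderedForest β] [Finite α]
    [Finite β] : ∃ (γ : Type u) (_ : OrderedForest γ) (_ : Finite γ), VertexArrows γ α β := by
  apply induction_on (α := β)
  · exact fun β _ _ => ⟨β, inferInstance, inferInstance, fun X => .inr ⟨.refl β, isEmptyElim⟩⟩
  · rintro β₁ β₂ _ _ _ _ - ⟨γ₂, _, _, h₂⟩
    obtain ⟨γ₁, _, _, h₁⟩ := exists_vertexArrows_withBot α β₁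
    refine ⟨γ₁ ⊕ γ₂, inferInstance, inferInstance, fun X => ?_⟩
    rcases h₁ {x | Sum.inl x ∈ X} with ⟨j₁, hj₁⟩ | ⟨j₁, hj₁⟩
    · exact .inl ⟨inl.comp j₁, hj₁⟩
    rcases h₂ {x | Sum.inr x ∈ X} with ⟨j₂, hj₂⟩ | ⟨j₂, hj₂⟩
    · exact .inl ⟨inr.comp j₂, hj₂⟩
    · exact .inr ⟨sumMap j₁ j₂, Sum.rec hj₁ hj₂⟩
  · rintro β β' _ _ - g - ⟨γ, _, _, h⟩
    exact ⟨γ, inferInstance, inferInstance, fun X =>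
      (h X).imp_right fun ⟨j, hj⟩ => ⟨j.comp g, fun b => hj (g b)⟩⟩

theorem exists_vertex_ramsey (κ : Type v) [Finite κ] (α : Type u) [OrderedForest α] [Finite α] :
    ∃ (γ : Type u) (_ : OrderedForest γ) (_ : Finite γ),
      ∀ χ : γ → κ, ∃ (j : α ↪ᶠ γ) (k : κ), ∀ a, χ (j a) = k := by
  induction κ using Finite.induction_empty_option with
  | of_equiv φ h =>
    obtain ⟨γ, _, _, h⟩ := h
    refine ⟨γ, inferInstance, inferInstance, fun χ => ?_⟩
    obtain ⟨j, k, hj⟩ := h (φ.symm ∘ χ)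
    exact ⟨j, φ k, fun a => φ.symm_apply_eq.1 (hj a)⟩
  | h_empty => exact ⟨WithBot α, inferInstance, inferInstance, fun χ => (χ ⊥).elim⟩
  | h_option h =>
    obtain ⟨γ, _, _, h⟩ := h
    obtain ⟨δ, _, _, hδ⟩ := exists_vertexArrows α γ
    refine ⟨δ, inferInstance, inferInstance, fun χ => ?_⟩
    rcases hδ {x | χ x = none} with ⟨j, hj⟩ | ⟨j, hj⟩
    · exact ⟨j, none, hj⟩
    · choose χ' hχ' using fun x => Option.ne_none_iff_exists'.1 (hj x)
      obtain ⟨j', k, hj'⟩ := h χ'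
      exact ⟨j.comp j', some k, fun a => (hχ' _).trans (congrArg some (hj' a))⟩

/-! ### Colourings of embeddings -/

/-- The Ramsey property of `α`: for every number of colours and every finite `β` there is a finite
`γ` with `γ → (β)^α`, where embeddings rather than copies of `α` are coloured. -/
def IsRamsey (α : Type u) [OrderedForest α] : Prop :=
  ∀ (κ : Type u) [Finite κ] (β : Type u) [OrderedForest β] [Finite β],
    ∃ (γ : Type u) (_ : OrderedForest γ) (_ : Finite γ),
      ∀ χ : (α ↪ᶠ γ) → κ, ∃ (j : β ↪ᶠ γ) (k : κ), ∀ e : α ↪ᶠ β, χ (j.comp e) = k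

/-- The canonical form of the Ramsey property of `α` in which the colour of an embedding is only
required to depend on the image of the vertex `a`. -/
def IsRamseyAt {α : Type u} [OrderedForest α] (a : α) : Prop :=
  ∀ (κ : Type u) [Finite κ] (β : Type u) [OrderedForest β] [Finite β],
    ∃ (γ : Type u) (_ : OrderedForest γ) (_ : Finite γ),
      ∀ χ : (α ↪ᶠ γ) → κ, ∃ (j : β ↪ᶠ γ) (f : β → κ), ∀ e : α ↪ᶠ β, χ (j.comp e) = f (e a)

theorem IsRamseyAt.isRamsey {α : Type u} [OrderedForest α] {a : α} (h : IsRamseyAt a) :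
    IsRamsey α := by
  intro κ _ β _ _
  obtain ⟨β', _, _, hβ'⟩ := exists_vertex_ramsey κ β
  obtain ⟨γ, _, _, hγ⟩ := h κ β'
  refine ⟨γ, inferInstance, inferInstance, fun χ => ?_⟩
  obtain ⟨j, f, hj⟩ := hγ χ
  obtain ⟨j', k, hk⟩ := hβ' f
  exact ⟨j.comp j', k, fun e => (hj (j'.comp e)).trans (hk (e a))⟩

theorem IsRamsey.isRamseyAt_bot {α : Type u} [OrderedForest α] (h : IsRamsey α) :
    IsRamseyAt (⊥ : WithBot α) := by
  intro κ _ β _ _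
  apply induction_on (α := β)
  · exact fun β _ _ => ⟨β, inferInstance, inferInstance, fun χ =>
      ⟨.refl β, isEmptyElim, fun e => isEmptyElim (e ⊥)⟩⟩
  · rintro β₁ β₂ _ _ _ _ ⟨γ₁, _, _, h₁⟩ ⟨γ₂, _, _, h₂⟩
    obtain ⟨δ, _, _, hδ⟩ := h κ γ₁
    refine ⟨WithBot δ ⊕ γ₂, inferInstance, inferInstance, fun χ => ?_⟩
    obtain ⟨j₀, k, h₀⟩ := hδ fun e => χ (inl.comp e.withBotMap)
    obtain ⟨j₁, f₁, h₁⟩ := h₁ fun e => χ (inl.comp (j₀.comp e).withBotCoe)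
    obtain ⟨j₂, f₂, h₂⟩ := h₂ fun e => χ (inr.comp e)
    refine ⟨sumMap (j₀.comp j₁).withBotMap j₂, Sum.elim (WithBot.recBotCoe k f₁) f₂, fun e => ?_⟩
    obtain ⟨g, rfl⟩ | ⟨g, rfl⟩ := e.eq_comp_inl_or_eq_comp_inr
    · obtain ⟨g, rfl⟩ | ⟨g, rfl⟩ := g.eq_withBotMap_or_eq_withBotCoe
      · exact (congrArg (fun e => χ (inl.comp e)) (withBotMap_comp (j₀.comp j₁) g).symm).trans
          (h₀ (j₁.comp g))
      · exact h₁ g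
    · exact h₂ g
  · rintro β β' _ _ - g - ⟨γ, _, _, h⟩
    refine ⟨γ, inferInstance, inferInstance, fun χ => ?_⟩
    obtain ⟨j, f, hj⟩ := h χ
    exact ⟨j.comp g, f ∘ g, fun e => hj (g.comp e)⟩

theorem IsRamsey.isRamseyAt_inl_bot {α β : Type u} [OrderedForest α] [OrderBot α]
    [OrderedForest β] [Finite β] (hα : IsRamsey α) (hβ : IsRamsey β) :
    IsRamseyAt (Sum.inl ⊥ : α ⊕ β) := by
  intro κ _ τ _ _
  apply induction_on (α := τ)
  · exact fun τ _ _ => ⟨τ, inferInstance, inferInstance, fun χ =>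
      ⟨.refl τ, isEmptyElim, fun e => isEmptyElim (e (Sum.inl ⊥))⟩⟩
  · rintro τ₁ τ₂ _ _ _ _ - ⟨γ, _, _, hγ⟩
    obtain ⟨γ₂, _, _, h₂⟩ := hβ κ γ
    obtain ⟨γ₁, _, _, h₁⟩ := hα ((β ↪ᶠ γ₂) → κ) (WithBot τ₁)
    refine ⟨γ₁ ⊕ γ₂, inferInstance, inferInstance, fun χ => ?_⟩
    obtain ⟨j₁, χ₂, h₁⟩ := h₁ fun g h => χ (sumMap g h)
    obtain ⟨j₂, k, h₂⟩ := h₂ χ₂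
    obtain ⟨j₃, f, h₃⟩ := hγ fun e => χ (inr.comp (j₂.comp e))
    refine ⟨sumMap j₁ (j₂.comp j₃), Sum.elim (fun _ => k) f, fun e => ?_⟩
    obtain ⟨g, rfl⟩ | ⟨g, h, rfl⟩ := e.eq_comp_inr_or_eq_sumMap
    · exact h₃ g
    · calc χ ((sumMap j₁ (j₂.comp j₃)).comp (sumMap g h))
          = χ (sumMap (j₁.comp g) (j₂.comp (j₃.comp h))) := congrArg χ (sumMap_comp_sumMap ..)
        _ = χ₂ (j₂.comp (j₃.comp h)) := congrFun (h₁ g) _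
        _ = k := h₂ (j₃.comp h)
  · rintro τ τ' _ _ - g - ⟨γ, _, _, h⟩
    refine ⟨γ, inferInstance, inferInstance, fun χ => ?_⟩
    obtain ⟨j, f, hj⟩ := h χ
    exact ⟨j.comp g, f ∘ g, fun e => hj (g.comp e)⟩

theorem isRamsey (α : Type u) [OrderedForest α] [Finite α] : IsRamsey α := by
  apply induction_on (α := α)
  · intro α _ _ κ _ β _ _
    exact ⟨β, inferInstance, inferInstance, fun χ =>
      ⟨.refl β, χ .ofIsEmpty, fun e => congrArg χ (ext isEmptyElim)⟩⟩
  · exact fun α β _ _ _ _ hα hβ => (hα.isRamseyAt_bot.isRamsey.isRamseyAt_inl_bot hβ).isRamsey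
  · intro α α' _ _ f g hfg h κ _ β _ _
    obtain ⟨γ, _, _, hγ⟩ := h κ β
    refine ⟨γ, inferInstance, inferInstance, fun χ => ?_⟩
    obtain ⟨j, k, hj⟩ := hγ fun e => χ (e.comp g)
    refine ⟨j, k, fun e => ?_⟩
    calc χ (j.comp e) = χ (j.comp (e.comp (f.comp g))) := by rw [hfg, comp_refl]
      _ = k := hj (e.comp f)

theorem exists_rooted_ramsey (κ α β : Type u) [Finite κ] [OrderedForest α] [OrderBot α] [Finite α]
    [OrderedForest β] [OrderBot β] [Finite β] :
    ∃ (γ : Type u) (_ : OrderedForest γ) (_ : OrderBot γ) (_ : Finite γ), ∀ χ : (α ↪ᶠ γ) → κ,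
      ∃ j : β ↪ᶠ γ, j ⊥ = ⊥ ∧ ∃ k, ∀ e : α ↪ᶠ β, e ⊥ = ⊥ → χ (j.comp e) = k := by
  obtain ⟨fα, gα, hα, hfα, -⟩ := exists_withBot_iso α
  obtain ⟨-, gβ, -, -, hgβ⟩ := exists_withBot_iso β
  obtain ⟨γ, _, _, hγ⟩ := isRamsey {x : α // ⊥ < x} κ {x : β // ⊥ < x}
  refine ⟨WithBot γ, inferInstance, inferInstance, inferInstance, fun χ => ?_⟩
  obtain ⟨j, k, hj⟩ := hγ fun e => χ (e.withBotMap.comp gα)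
  refine ⟨j.withBotMap.comp gβ, by simp [hgβ], k, fun e he => ?_⟩
  obtain ⟨g, hg⟩ := (gβ.comp (e.comp fα)).eq_withBotMap (by simp [hfα, he, hgβ])
  calc χ ((j.withBotMap.comp gβ).comp e)
      = χ ((j.withBotMap.comp gβ).comp (e.comp (fα.comp gα))) := by rw [hα, comp_refl]
    _ = χ ((j.withBotMap.comp (gβ.comp (e.comp fα))).comp gα) := rfl
    _ = χ ((j.comp g).withBotMap.comp gα) := by rw [hg, withBotMap_comp]
    _ = k := hj g

end OrderedForest

namespace OTree

/-! ### Ordered trees as ordered forests -/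

variable {S T : OTree} {u v w m a b : T.α}

instance (T : OTree) : Finite T.α := T.fin

instance (T : OTree) : PartialOrder T.α where
  le := T.le
  le_refl := T.le_refl
  le_trans := T.le_trans
  le_antisymm := T.le_antisymm

instance (T : OTree) : OrderBot T.α where
  bot := T.root
  bot_le := T.root_le

theorem treeImmSucc_iff_covBy {α : Type} [PartialOrder α] {v w : α} :
    TreeImmSucc (· ≤ ·) v w ↔ v ⋖ w := by
  simp only [TreeImmSucc, covBy_iff_lt_and_eq_or_eq, lt_iff_le_and_ne, and_assoc]

theorem le_of_covBy_of_lt (ha : m ⋖ a) (hav : a ≤ v) (hmu : m < u) (huv : u ≤ v) : a ≤ u :=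
  (T.pred_linear v a u hav huv).elim id
    fun h => ((ha.eq_or_eq hmu.le h).resolve_left hmu.ne').ge

theorem eq_of_covBy_of_le (ha : m ⋖ a) (hb : m ⋖ b) (hav : a ≤ v) (hbv : b ≤ v) : a = b :=
  (le_of_covBy_of_lt ha hav hb.lt hbv).antisymm (le_of_covBy_of_lt hb hbv ha.lt hav)

theorem isMeet_of_covBy (ha : m ⋖ a) (hb : m ⋖ b) (hab : a ≠ b) (hav : a ≤ v) (hbw : b ≤ w) :
    T.IsMeet v w m := by
  refine ⟨ha.le.trans hav, hb.le.trans hbw, fun u huv huw => ?_⟩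
  by_contra hum
  have hmu : m < u := lt_of_le_not_ge
    ((T.pred_linear v u m huv (ha.le.trans hav)).resolve_left hum) hum
  exact hab (eq_of_covBy_of_le ha hb (le_of_covBy_of_lt ha hav hmu huv)
    (le_of_covBy_of_lt hb hbw hmu huw))

theorem exists_isMeet (v w : T.α) : ∃ m, T.IsMeet v w m := by
  obtain ⟨m, ⟨hmv, hmw⟩, hm⟩ :=
    (Set.toFinite {u : T.α | u ≤ v ∧ u ≤ w}).exists_maximal ⟨⊥, bot_le, bot_le⟩
  exact ⟨m, hmv, hmw, fun u huv huw =>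
    (T.pred_linear v u m huv hmv).elim id (hm ⟨huv, huw⟩)⟩

theorem IsMeet.unique {m' : T.α} (h : T.IsMeet v w m) (h' : T.IsMeet v w m') : m = m' :=
  T.le_antisymm m m' (h'.2.2 m h.1 h.2.1) (h.2.2 m' h'.1 h'.2.1)

theorem exists_covBy_of_not_le (hvw : ¬ v ≤ w) (hwv : ¬ w ≤ v) :
    ∃ m a b : T.α, m ⋖ a ∧ m ⋖ b ∧ a ≠ b ∧ a ≤ v ∧ b ≤ w := by
  obtain ⟨m, (hmv : m ≤ v), (hmw : m ≤ w), hm⟩ := exists_isMeet v w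
  obtain ⟨a, ha, hav⟩ := exists_covBy_le_of_lt (lt_of_le_of_ne hmv fun h => hvw (h ▸ hmw))
  obtain ⟨b, hb, hbw⟩ := exists_covBy_le_of_lt (lt_of_le_of_ne hmw fun h => hwv (h ▸ hmv))
  exact ⟨m, a, b, ha, hb, fun h => ha.lt.not_ge (hm a hav (h ▸ hbw)), hav, hbw⟩

theorem covBy_of_sOrd (h : T.sOrd m a b) : m ⋖ a ∧ m ⋖ b :=
  (T.sOrd_dom m a b h).imp treeImmSucc_iff_covBy.1 treeImmSucc_iff_covBy.1

/-- `T.LeftOf v w` says that `v` and `w` lie above two distinct immediate successors of a vertex,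
that below `v` preceding that below `w`. This is the part of the lexicographic order which compares
incomparable elements. -/
def LeftOf (T : OTree) (v w : T.α) : Prop :=
  ∃ m a b, T.sOrd m a b ∧ a ≠ b ∧ a ≤ v ∧ b ≤ w

theorem LeftOf.mono {v' w' : T.α} (h : T.LeftOf v w) (hv : v ≤ v') (hw : w ≤ w') :
    T.LeftOf v' w' := by
  obtain ⟨m, a, b, hab, hne, hav, hbw⟩ := h
  exact ⟨m, a, b, hab, hne, hav.trans hv, hbw.trans hw⟩

theorem LeftOf.irrefl (v : T.α) : ¬ T.LeftOf v v := fun ⟨_, _, _, hab, hne, hav, hbv⟩ =>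
  hne (eq_of_covBy_of_le (covBy_of_sOrd hab).1 (covBy_of_sOrd hab).2 hav hbv)

theorem LeftOf.trans (huv : T.LeftOf u v) (hvw : T.LeftOf v w) : T.LeftOf u w := by
  obtain ⟨m, a, b, hab, hne, hau, hbv⟩ := huv
  obtain ⟨n, b', c, hbc, hne', hbv', hcw⟩ := hvw
  obtain ⟨ha, hb⟩ := covBy_of_sOrd hab
  obtain ⟨hb', hc⟩ := covBy_of_sOrd hbc
  have hmv : m ≤ v := hb.le.trans hbv
  have hnv : n ≤ v := hb'.le.trans hbv'
  by_cases hmn : m = n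
  · subst hmn
    obtain rfl := eq_of_covBy_of_le hb hb' hbv hbv'
    refine ⟨m, a, c, T.sOrd_trans m a b c hab hbc, ?_, hau, hcw⟩
    rintro rfl
    exact hne (T.sOrd_antisymm m a b hab hbc)
  rcases T.pred_linear v m n hmv hnv with h | h
  · have hbn : b ≤ n := le_of_covBy_of_lt hb hbv (lt_of_le_of_ne h hmn) hnv
    exact ⟨m, a, b, hab, hne, hau, hbn.trans (hc.le.trans hcw)⟩
  · have hbm : b' ≤ m := le_of_covBy_of_lt hb' hbv' (lt_of_le_of_ne h (Ne.symm hmn)) hmv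
    exact ⟨n, b', c, hbc, hne', hbm.trans (ha.le.trans hau), hcw⟩

theorem le_or_leftOf (v w : T.α) : v ≤ w ∨ w ≤ v ∨ T.LeftOf v w ∨ T.LeftOf w v := by
  by_cases hvw : v ≤ w
  · exact .inl hvw
  by_cases hwv : w ≤ v
  · exact .inr (.inl hwv)
  obtain ⟨m, a, b, ha, hb, hne, hav, hbw⟩ := exists_covBy_of_not_le hvw hwv
  rcases T.sOrd_total m a b (treeImmSucc_iff_covBy.2 ha) (treeImmSucc_iff_covBy.2 hb) with h | h
  · exact .inr (.inr (.inl ⟨m, a, b, h, hne, hav, hbw⟩))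
  · exact .inr (.inr (.inr ⟨m, b, a, h, hne.symm, hbw, hav⟩))

instance (T : OTree) : OrderedForest T.α where
  left := T.LeftOf
  left_irrefl := LeftOf.irrefl
  left_trans := LeftOf.trans
  left_mono := LeftOf.mono
  le_or_left := le_or_leftOf

theorem lexLE_iff : T.lexLE v w ↔ v ≤ w ∨ v ≺ w := by
  constructor
  · rintro (h | ⟨-, -, m, a, b, hm, ha, hav, -, hbw, hab⟩)
    · exact .inl h
    · refine .inr ⟨m, a, b, hab, ?_, hav, hbw⟩
      rintro rfl
      exact (treeImmSucc_iff_covBy.1 ha).lt.not_ge (hm.2.2 a hav hbw)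
  · rintro (h | h)
    · exact .inl h
    · obtain ⟨m, a, b, hab, hne, hav, hbw⟩ := id h
      obtain ⟨ha, hb⟩ := T.sOrd_dom m a b hab
      exact .inr ⟨not_le_of_left h, not_ge_of_left h, m, a, b,
        isMeet_of_covBy (treeImmSucc_iff_covBy.1 ha) (treeImmSucc_iff_covBy.1 hb) hne hav hbw,
        ha, hav, hb, hbw, hab⟩

theorem IsMorphism.map_le_map_iff {e : S.α → T.α} (he : IsMorphism S T e)
    (hinj : Function.Injective e) {v w : S.α} : e v ≤ e w ↔ v ≤ w := by
  refine ⟨fun h => ?_, fun h => (he.1 v w v ⟨S.le_refl v, h, fun _ hu _ => hu⟩).2.1⟩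
  obtain ⟨m, hm⟩ := exists_isMeet v w
  have hv : T.IsMeet (e v) (e w) (e v) := ⟨T.le_refl (e v), h, fun _ hu _ => hu⟩
  exact hinj (hv.unique (he.1 v w m hm)) ▸ hm.2.1

/-- The embedding of ordered forests given by an injective morphism of ordered trees. -/
def IsMorphism.toForestEmbedding {e : S.α → T.α} (he : IsMorphism S T e)
    (hinj : Function.Injective e) : S.α ↪ᶠ T.α where
  toFun := e
  map_le_map_iff' _ _ := he.map_le_map_iff hinj
  map_left' v w h := (lexLE_iff.1 (he.2.1 v w (lexLE_iff.2 (.inr h)))).resolve_left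
    fun hvw => not_le_of_left h ((he.map_le_map_iff hinj).1 hvw)
  exists_le_of_le' z v w hv hw := by
    obtain ⟨m, hm⟩ := exists_isMeet v w
    exact ⟨m, hm.1, hm.2.1, (he.1 v w m hm).2.2 z hv hw⟩

/-- A finite ordered forest with a least element, as an ordered tree. -/
def ofForest (α : Type) [OrderedForest α] [OrderBot α] [Finite α] : OTree where
  α := α
  fin := inferInstance
  le := (· ≤ ·)
  le_refl _ := le_rfl
  le_antisymm _ _ := LE.le.antisymm
  le_trans _ _ _ := LE.le.trans
  root := ⊥
  root_le _ := bot_le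
  pred_linear _ _ _ := le_total_of_le
  sOrd v a b := v ⋖ a ∧ v ⋖ b ∧ (a = b ∨ a ≺ b)
  sOrd_dom _ _ _ h := ⟨treeImmSucc_iff_covBy.2 h.1, treeImmSucc_iff_covBy.2 h.2.1⟩
  sOrd_refl _ _ h := ⟨treeImmSucc_iff_covBy.1 h, treeImmSucc_iff_covBy.1 h, .inl rfl⟩
  sOrd_antisymm _ _ _ hab hba := by
    rcases hab.2.2 with h | h
    · exact h
    · exact (hba.2.2.resolve_right (left_asymm h)).symm
  sOrd_trans := by
    rintro v a b c ⟨ha, -, rfl | hab⟩ ⟨-, hc, rfl | hbc⟩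
    exacts [⟨ha, hc, .inl rfl⟩, ⟨ha, hc, .inr hbc⟩, ⟨ha, hc, .inr hab⟩,
      ⟨ha, hc, .inr (left_trans hab hbc)⟩]
  sOrd_total v a b ha hb := by
    rw [treeImmSucc_iff_covBy] at ha hb
    rcases le_or_left a b with h | h | h | h
    · exact .inl ⟨ha, hb, .inl ((hb.eq_or_eq ha.le h).resolve_left ha.ne')⟩
    · exact .inr ⟨hb, ha, .inl ((ha.eq_or_eq hb.le h).resolve_left hb.ne')⟩
    · exact .inl ⟨ha, hb, .inr h⟩
    · exact .inr ⟨hb, ha, .inr h⟩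

variable {α : Type} [OrderedForest α] [OrderBot α] [Finite α]

theorem leftOf_ofForest {x y : α} (h : x ≺ y) : (ofForest α).LeftOf x y := by
  rcases le_or_leftOf (T := ofForest α) x y with h' | h' | h' | ⟨m, b, a, hba, hne, hby, hax⟩
  · exact (not_le_of_left h h').elim
  · exact (not_ge_of_left h h').elim
  · exact h'
  · exact absurd (left_mono (hba.2.2.resolve_left hne) hby hax) (left_asymm h)

theorem isMorphism_ofForest (f : T.α ↪ᶠ α) (hf : f ⊥ = ⊥) : IsMorphism T (ofForest α) f := by
  refine ⟨fun v w m hm => ?_, fun v w h => ?_, hf⟩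
  · refine ⟨f.map_le_map_iff.2 hm.1, f.map_le_map_iff.2 hm.2.1, fun z hzv hzw => ?_⟩
    obtain ⟨u, huv, huw, hzu⟩ := f.exists_le_of_le hzv hzw
    exact hzu.trans (f.map_le_map_iff.2 (hm.2.2 u huv huw))
  · exact lexLE_iff.2 ((lexLE_iff.1 h).imp f.map_le_map_iff.2 fun hvw =>
      leftOf_ofForest (f.map_left hvw))

end OTree

/-- **Leeb's Ramsey theorem for trees.** For every number of colors `c ≥ 1` and all ordered
trees `S, T` there is an ordered tree `U` such that for every coloring with `c` colors of the
copies of `S` in `U` there is an embedding `j : T → U` such that all copies of `S` in `U` of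
the form `j(C)`, for `C` a copy of `S` in `T`, get the same color. -/
theorem leeb_ramsey_for_trees (c : ℕ) (hc : 0 < c) (S T : OTree) :
    ∃ U : OTree, ∀ χ : Set U.α → Fin c,
      ∃ j : T.α → U.α, IsMorphism T U j ∧ Function.Injective j ∧
        ∃ color : Fin c, ∀ C : Set T.α, OTree.IsCopy S T C → χ (j '' C) = color := by
  obtain ⟨γ, _, _, _, hγ⟩ := exists_rooted_ramsey (Fin c) S.α T.α
  refine ⟨ofForest γ, fun χ => ?_⟩
  obtain ⟨j, hj, k, hk⟩ := hγ fun e => χ (Set.range e)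
  refine ⟨j, isMorphism_ofForest j hj, j.injective, k, ?_⟩
  rintro _ ⟨e, he, hinj, rfl⟩
  exact (congrArg χ (Set.range_comp j e).symm).trans (hk (he.toForestEmbedding hinj) he.2.2)
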